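/- For every integer n ≥ 4 and every i ∈ [n], |VPF_{n,[i]}| = ((i−1)(i−2)/2)·|VPF_{n-3}| + Σ_{ℓ=1}^{i-1} |VPF_{n-1,[ℓ]}| + (i−1)·Σ_{ℓ=1}^{i-2} |VPF_{n-2,ℓ}| + Σ_{ℓ=1}^{i-3} (ℓ(ℓ+1)/2)·|VPF_{n-3,(ℓ)}| + ((i−2)(i−1)/2)·Σ_{ℓ=i-2}^{n-3} |VPF_{n-3,(ℓ)}|. -/

import Mathlib

/-- One car with (1-indexed) preference `p` attempts to park on a one-way street with
spots `1,…,n` under the `k`-vacillating rule, given the set `occ` of occupied spots: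
it parks in spot `p` if unoccupied; otherwise in spot `p - k` if `p - k ≥ 1` and it is
unoccupied; otherwise in spot `p + k` if `p + k ≤ n` and it is unoccupied; otherwise it
fails to park (`none`). -/
def parkStep (n k : ℕ) (occ : Finset ℕ) (p : ℕ) : Option ℕ :=
  if p ∉ occ then some p
  else if k < p ∧ p - k ∉ occ then some (p - k)
  else if p + k ≤ n ∧ p + k ∉ occ then some (p + k)
  else none

/-- Park the cars whose preference list is given, in order, under the `k`-vacillating
rule on a street with spots `1,…,n`, starting from occupied set `occ`.  Returns the list
of spots occupied by the cars (in the order the cars arrive), or `none` if some car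
fails to park. -/
def parkAssign (n k : ℕ) (occ : Finset ℕ) : List ℕ → Option (List ℕ)
  | [] => some []
  | p :: ps =>
    match parkStep n k occ p with
    | none => none
    | some s => (parkAssign n k (insert s occ) ps).map (s :: ·)

/-- The 1-indexed preference list in `[n]^m` associated to `α : Fin m → Fin n`
(car `i+1` prefers spot `α i + 1`). -/
def prefList {m n : ℕ} (α : Fin m → Fin n) : List ℕ :=
  List.ofFn fun i => (α i : ℕ) + 1

/-- The set of `k`-vacillating parking functions of length `n`:
preference lists in `[n]^n` (encoded as `Fin n → Fin n`) for which all `n` cars park. -/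
def VPFk (n k : ℕ) : Finset (Fin n → Fin n) :=
  Finset.univ.filter fun α => (parkAssign n k ∅ (prefList α)).isSome

/-- The set of vacillating parking functions of length `n` (the case `k = 1`). -/
def VPF (n : ℕ) : Finset (Fin n → Fin n) := VPFk n 1

/-- The (1-indexed) spot occupied by the (1-indexed) car `i` when the cars with
preference list `α` park under the vacillating (`k = 1`) rule. -/
def spotOfCar (n : ℕ) (α : Fin n → Fin n) (i : ℕ) : Option ℕ :=
  (parkAssign n 1 ∅ (prefList α)).bind fun l => l[i-1]?

/-- The (1-indexed) preferred spot of the (1-indexed) car `i`. -/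
def prefOfCar (n : ℕ) (α : Fin n → Fin n) (i : ℕ) : Option ℕ :=
  (prefList α)[i-1]?

/-- `VPF_{n,i}`: vacillating parking functions of length `n` in which spot `n` is
occupied by car `i`. -/
def VPF_i (n i : ℕ) : Finset (Fin n → Fin n) :=
  (VPF n).filter fun α => spotOfCar n α i = some n

/-- `VPF_{n,(i)}`: vacillating parking functions of length `n` in which car `i`
prefers spot `n` and parks in spot `n`. -/
def VPF_paren (n i : ℕ) : Finset (Fin n → Fin n) :=
  (VPF n).filter fun α => prefOfCar n α i = some n ∧ spotOfCar n α i = some n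

/-- `VPF_{n,[i]}`: vacillating parking functions of length `n` in which car `i`
prefers spot `n - 1` and parks in spot `n`. -/
def VPF_bracket (n i : ℕ) : Finset (Fin n → Fin n) :=
  (VPF n).filter fun α => prefOfCar n α i = some (n-1) ∧ spotOfCar n α i = some n

/-!
Suppose that car `i` prefers `n - 1` but parks in `n`. Deleting it leaves a parking function of
length `n - 1` in which spots `n - 1` and `n - 2` are filled before the arrival of car `i`: a later
car preferring `n` would have to park in `n - 1`, which is already taken. Now split according to
the car `j < i` that fills spot `n - 1`. If it preferred `n - 2`, then spot `n - 2` was already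
taken, and we count `VPF_{n-1,[j]}`. If it preferred `n - 1`, delete it and regard spot `n - 1` as
taken from the start. At most one later car may still prefer `n - 1`, and it parks in `n - 2`, so
lowering its preference to `n - 2` gives a parking function of length `n - 2` without changing any
spot. Thus this case is counted by the sets `VPF_{n-2,ℓ}` (no such later car) and `VPF_{n-2,(ℓ)}`
with `ℓ ≥ j`, where `ℓ ≤ i - 2` because spot `n - 2` is filled before car `i` arrives. The same
deletion gives a recurrence for `VPF_{n-2,(ℓ)}`, and exchanging the order of summation yields the
formula.
-/

section FinsetsOfLists

open Finset

variable {ι κ α β : Type*} {l A B : List α} {x y p p' : α} {s s' : β} {t : ℕ}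

theorem card_filter_exists_eq_sum {X : Finset ι} {I : Finset κ} (R : ι → κ → Prop)
    [∀ x c, Decidable (R x c)] (hR : ∀ x ∈ X, ∀ c ∈ I, ∀ d ∈ I, R x c → R x d → c = d) :
    #{x ∈ X | ∃ c ∈ I, R x c} = ∑ c ∈ I, #{x ∈ X | R x c} := by
  classical
  rw [← card_biUnion]
  · congr 1
    ext x
    simp only [mem_filter, mem_biUnion]
    grind
  · intro c hc d hd hcd
    refine disjoint_filter.2 fun x hx hxc hxd => hcd (hR x hx c hc d hd hxc hxd)

theorem getElem?_eq_some_iff_exists_append :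
    l[t]? = some x ↔ ∃ A B, A.length = t ∧ l = A ++ x :: B := by
  constructor
  · intro h
    obtain ⟨ht, rfl⟩ := List.getElem?_eq_some_iff.1 h
    exact ⟨l.take t, l.drop (t + 1), List.length_take_of_le ht.le, by simp⟩
  · rintro ⟨A, B, rfl, rfl⟩
    simp

theorem mem_take_iff_exists_mem_Icc_getElem? :
    x ∈ l.take t ↔ ∃ ℓ ∈ Icc 1 t, l[ℓ - 1]? = some x := by
  simp only [List.mem_iff_getElem?, List.getElem?_take, mem_Icc]
  constructor
  · rintro ⟨c, hc⟩
    exact ⟨c + 1, by grind⟩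
  · rintro ⟨ℓ, hℓ, hx⟩
    exact ⟨ℓ - 1, by grind⟩

theorem mem_take_succ_append_cons_iff (hA : A.length ≤ t) (hxy : x ≠ y) :
    x ∈ (A ++ y :: B).take (t + 1) ↔ x ∈ (A ++ B).take t := by
  obtain ⟨d, rfl⟩ := Nat.exists_eq_add_of_le hA
  rw [add_assoc, List.take_length_add_append, List.take_length_add_append, List.take_succ_cons]
  simp [hxy]

theorem getElem?_sub_one_inj {c d : ℕ} (hl : l.Nodup) (h1c : 1 ≤ c) (h1d : 1 ≤ d)
    (hc : l[c - 1]? = some x) (hd : l[d - 1]? = some x) : c = d := by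
  have := (List.getElem?_inj (List.getElem?_eq_some_iff.1 hc).1 hl).1 (hc.trans hd.symm)
  omega

theorem card_filter_mem_take_eq_sum [DecidableEq α] {X : Finset ι} {g : ι → List α}
    (hg : ∀ x ∈ X, (g x).Nodup) (y : α) (t : ℕ) :
    #{x ∈ X | y ∈ (g x).take t} = ∑ ℓ ∈ Icc 1 t, #{x ∈ X | (g x)[ℓ - 1]? = some y} := by
  simp only [mem_take_iff_exists_mem_Icc_getElem?]
  exact card_filter_exists_eq_sum _ fun x hx c hc d hd =>
    getElem?_sub_one_inj (hg x hx) (mem_Icc.1 hc).1 (mem_Icc.1 hd).1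

theorem insertIdx_length_append (A B : List α) (a : α) :
    (A ++ B).insertIdx A.length a = A ++ a :: B := by
  induction A with
  | nil => rfl
  | cons b A ih => exact congrArg (b :: ·) ih

variable [DecidableEq α] [DecidableEq β] {X Y : Finset (List α × List β)}

theorem card_filter_getElem?_eq_card_of_insert
    (hY : ∀ y ∈ Y, t ≤ y.1.length ∧ t ≤ y.2.length)
    (hXY : ∀ A B S T, A.length = t → S.length = t →
      ((A ++ p :: B, S ++ s :: T) ∈ X ↔ (A ++ B, S ++ T) ∈ Y)) :
    #{x ∈ X | x.1[t]? = some p ∧ x.2[t]? = some s} = #Y := by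
  have hinj : Function.Injective
      (Prod.map (fun l : List α => l.insertIdx t p) fun σ : List β => σ.insertIdx t s) :=
    (List.insertIdx_injective t p).prodMap (List.insertIdx_injective t s)
  rw [← card_image_of_injective Y hinj]
  congr 1
  ext ⟨l, σ⟩
  simp only [mem_filter, mem_image, Prod.exists, Prod.map_apply, Prod.mk.injEq]
  constructor
  · rintro ⟨hx, hl, hσ⟩
    obtain ⟨A, B, rfl, rfl⟩ := getElem?_eq_some_iff_exists_append.1 hl
    obtain ⟨S, T, hS, rfl⟩ := getElem?_eq_some_iff_exists_append.1 hσ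
    exact ⟨A ++ B, S ++ T, (hXY A B S T rfl hS).1 hx, insertIdx_length_append A B p,
      hS ▸ insertIdx_length_append S T s⟩
  · rintro ⟨l, σ, hy, rfl, rfl⟩
    obtain ⟨htl, htσ⟩ : t ≤ l.length ∧ t ≤ σ.length := hY _ hy
    have hl := List.length_take_of_le htl
    have hσ := List.length_take_of_le htσ
    have hx := (hXY _ (l.drop t) _ (σ.drop t) hl hσ).2 (by simpa using hy)
    rw [← insertIdx_length_append, ← insertIdx_length_append, hl, hσ, List.take_append_drop,
      List.take_append_drop] at hx
    exact ⟨hx, by simp [List.getElem?_insertIdx_self, htl],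
      by simp [List.getElem?_insertIdx_self, htσ]⟩

theorem card_filter_getElem?_eq_card_filter_of_replace
    (hXY : ∀ A B S T, A.length = t → S.length = t →
      ((A ++ p :: B, S ++ s :: T) ∈ X ↔ (A ++ p' :: B, S ++ s' :: T) ∈ Y)) :
    #{x ∈ X | x.1[t]? = some p ∧ x.2[t]? = some s} =
      #{y ∈ Y | y.1[t]? = some p' ∧ y.2[t]? = some s'} := by
  refine card_nbij' (Prod.map (·.set t p') (·.set t s')) (Prod.map (·.set t p) (·.set t s))
    ?_ ?_ ?_ ?_
  all_goals
    rintro ⟨l, σ⟩ hx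
    simp only [coe_filter, Set.mem_ofPred_eq, getElem?_eq_some_iff_exists_append] at hx
    obtain ⟨hx, ⟨A, B, rfl, rfl⟩, S, T, hS, rfl⟩ := hx
  · simpa [← hS] using (hXY A B S T rfl hS).1 hx
  · simpa [← hS] using (hXY A B S T rfl hS).2 hx
  · simp [← hS]
  · simp [← hS]

end FinsetsOfLists

section Sums

open Finset

variable {u v M : ℕ}

theorem sum_Icc_one_sum_Icc_comm {R : Type*} [AddCommMonoid R] (hvu : v ≤ u) (f : ℕ → ℕ → R) :
    ∑ c ∈ Icc 1 u, ∑ d ∈ Icc c v, f c d = ∑ d ∈ Icc 1 v, ∑ c ∈ Icc 1 d, f c d :=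
  sum_comm' fun c d => by
    simp only [mem_Icc]
    omega

theorem sum_Icc_one_id (u : ℕ) : ∑ c ∈ Icc 1 u, c = u * (u + 1) / 2 := by
  have hrange : ∑ c ∈ range (u + 1), c = ∑ c ∈ Icc 1 u, c := by
    rw [range_eq_Ico, sum_eq_sum_Ico_succ_bot u.add_one_pos, zero_add, zero_add,
      Ico_add_one_right_eq_Icc]
  rw [← hrange, sum_range_id, Nat.add_sub_cancel, Nat.mul_comm]

theorem sum_Icc_one_mul_sum_Icc (hu : u ≤ M + 1) (p : ℕ → ℕ) :
    ∑ c ∈ Icc 1 u, c * ∑ d ∈ Icc c M, p d =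
      ∑ d ∈ Icc 1 (u - 1), d * (d + 1) / 2 * p d + u * (u + 1) / 2 * ∑ d ∈ Icc u M, p d := by
  have hsplit : ∀ c ∈ Icc 1 u,
      ∑ d ∈ Icc c M, p d = ∑ d ∈ Icc c (u - 1), p d + ∑ d ∈ Icc u M, p d := fun c hc => by
    rw [mem_Icc] at hc
    rw [← sum_union (disjoint_left.2 fun d => by simp only [mem_Icc]; omega)]
    congr 1
    ext d
    simp only [mem_union, mem_Icc]
    omega
  rw [sum_congr rfl fun c hc => by rw [hsplit c hc, mul_add], sum_add_distrib, ← sum_mul,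
    sum_Icc_one_id]
  simp only [mul_sum, sum_Icc_one_sum_Icc_comm (Nat.sub_le u 1), ← sum_mul, sum_Icc_one_id]

end Sums

/-- `Parks n k occ l σ`: on a street with spots `1,…,n` and occupied set `occ`, the cars with
preference list `l` in `[n]` all park under the `k`-vacillating rule, and `σ` lists their spots.
It presents `parkAssign` as a relation so that one can induct on the arriving cars. -/
inductive Parks (n k : ℕ) : Finset ℕ → List ℕ → List ℕ → Prop
  | nil (occ : Finset ℕ) : Parks n k occ [] []
  | cons {occ : Finset ℕ} {p s : ℕ} {l σ : List ℕ} (hp : p ∈ Finset.Icc 1 n)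
      (hs : parkStep n k occ p = some s) (h : Parks n k (insert s occ) l σ) :
      Parks n k occ (p :: l) (s :: σ)

section ParkStep

variable {n m k p s : ℕ} {occ : Finset ℕ}

theorem notMem_of_parkStep_eq_some (h : parkStep n k occ p = some s) : s ∉ occ := by
  unfold parkStep at h
  grind

theorem mem_Icc_of_parkStep_eq_some (hp : p ∈ Finset.Icc 1 n)
    (h : parkStep n k occ p = some s) : s ∈ Finset.Icc 1 n := by
  rw [Finset.mem_Icc] at hp ⊢
  unfold parkStep at h
  grind

theorem parkStep_of_notMem (h : p ∉ occ) : parkStep n k occ p = some p := if_pos h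

theorem parkStep_eq_some_self : parkStep n k occ p = some p ↔ p ∉ occ :=
  ⟨notMem_of_parkStep_eq_some, parkStep_of_notMem⟩

theorem parkStep_eq_some_add (hk : 0 < k) :
    parkStep n k occ p = some (p + k) ↔
      p ∈ occ ∧ (k < p → p - k ∈ occ) ∧ p + k ≤ n ∧ p + k ∉ occ := by
  unfold parkStep
  grind

theorem parkStep_succ_eq_some_and_ne (hp : p ≤ m) (hocc : m + 1 ∉ occ) :
    parkStep (m + 1) k occ p = some s ∧ s ≠ m + 1 ↔ parkStep m k occ p = some s := by
  unfold parkStep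
  grind

theorem parkStep_succ_insert (hp : p ≤ m) :
    parkStep (m + 1) k (insert (m + 1) occ) p = parkStep m k occ p := by
  unfold parkStep
  grind

theorem parkStep_last_eq_some (hocc : m + 1 ∈ occ) :
    parkStep (m + 1) 1 occ (m + 1) = some s ↔ 1 ≤ m ∧ m ∉ occ ∧ s = m := by
  unfold parkStep
  grind

end ParkStep

namespace Parks

variable {n m k p s c : ℕ} {occ : Finset ℕ} {l σ τ A B S T : List ℕ}

theorem cons_iff :
    Parks n k occ (p :: l) (s :: σ) ↔
      p ∈ Finset.Icc 1 n ∧ parkStep n k occ p = some s ∧ Parks n k (insert s occ) l σ :=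
  ⟨fun | cons hp hs h => ⟨hp, hs, h⟩, fun ⟨hp, hs, h⟩ => cons hp hs h⟩

theorem length_eq (h : Parks n k occ l σ) : σ.length = l.length := by
  induction h with
  | nil => rfl
  | cons _ _ _ ih => rw [List.length_cons, List.length_cons, ih]

theorem iff_parkAssign :
    Parks n k occ l σ ↔ (∀ p ∈ l, p ∈ Finset.Icc 1 n) ∧ parkAssign n k occ l = some σ := by
  induction l generalizing occ σ with
  | nil =>
    constructor
    · rintro ⟨⟩
      simp [parkAssign]
    · rintro ⟨-, ⟨⟩⟩
      exact nil occ
  | cons p l ih =>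
    rw [parkAssign, List.forall_mem_cons]
    constructor
    · rintro (_ | ⟨hp, hs, h⟩)
      obtain ⟨hl, h⟩ := ih.1 h
      simp only [hs, h]
      exact ⟨⟨hp, hl⟩, rfl⟩
    · rintro ⟨⟨hp, hl⟩, h⟩
      cases hs : parkStep n k occ p with
      | none => simp only [hs, reduceCtorEq] at h
      | some s =>
        simp only [hs, Option.map_eq_some_iff] at h
        obtain ⟨σ, h, rfl⟩ := h
        exact cons hp hs (ih.2 ⟨hl, h⟩)

theorem unique (hσ : Parks n k occ l σ) (hτ : Parks n k occ l τ) : σ = τ :=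
  Option.some_inj.1 ((iff_parkAssign.1 hσ).2.symm.trans (iff_parkAssign.1 hτ).2)

theorem append_iff (hAS : A.length = S.length) :
    Parks n k occ (A ++ B) (S ++ T) ↔
      Parks n k occ A S ∧ Parks n k (occ ∪ S.toFinset) B T := by
  induction A generalizing occ S with
  | nil =>
    obtain rfl := List.length_eq_zero_iff.1 hAS.symm
    simp [nil]
  | cons p A ih =>
    obtain ⟨s, S, rfl⟩ := List.exists_cons_of_length_eq_add_one hAS.symm
    simp only [List.cons_append, cons_iff, ih (Nat.succ.inj hAS), and_assoc, List.toFinset_cons,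
      Finset.union_insert, Finset.insert_union]

theorem append_cons_iff (hAS : A.length = S.length) :
    Parks n k occ (A ++ p :: B) (S ++ s :: T) ↔
      Parks n k occ A S ∧ p ∈ Finset.Icc 1 n ∧ parkStep n k (occ ∪ S.toFinset) p = some s ∧
        Parks n k (insert s (occ ∪ S.toFinset)) B T := by
  rw [append_iff hAS, cons_iff]

theorem notMem_of_mem (h : Parks n k occ l σ) (hs : s ∈ occ) : s ∉ σ := by
  induction h with
  | nil => exact List.not_mem_nil
  | cons _ hstep _ ih =>
    rw [List.mem_cons, not_or]
    exact ⟨fun he => notMem_of_parkStep_eq_some hstep (he ▸ hs), ih (Finset.mem_insert_of_mem hs)⟩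

theorem nodup (h : Parks n k occ l σ) : σ.Nodup := by
  induction h with
  | nil => exact List.nodup_nil
  | cons _ _ h ih => exact List.nodup_cons.2 ⟨h.notMem_of_mem (Finset.mem_insert_self _ _), ih⟩

theorem mem_Icc (h : Parks n k occ l σ) (hs : s ∈ σ) : s ∈ Finset.Icc 1 n := by
  induction h with
  | nil => exact absurd hs List.not_mem_nil
  | cons hp hstep _ ih =>
    obtain rfl | hs := List.mem_cons.1 hs
    · exact mem_Icc_of_parkStep_eq_some hp hstep
    · exact ih hs

theorem mem_of_length_eq (h : Parks n k occ l σ) (hl : l.length = n) (hs : s ∈ Finset.Icc 1 n) :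
    s ∈ σ := by
  have hsub : σ.toFinset ⊆ Finset.Icc 1 n := fun _ hx => h.mem_Icc (List.mem_toFinset.1 hx)
  have hcard : σ.toFinset.card = n := by
    rw [List.toFinset_card_of_nodup h.nodup, h.length_eq, hl]
  rw [← List.mem_toFinset, Finset.eq_of_subset_of_card_le hsub (by simp [hcard])]
  exact hs

theorem mem_take_of_length_eq (h : Parks n k occ l σ) (hl : l.length = n)
    (hs : s ∈ Finset.Icc 1 n) : s ∈ σ.take n := by
  rw [List.take_of_length_le (by rw [h.length_eq, hl])]
  exact h.mem_of_length_eq hl hs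

theorem succ_and_notMem_iff (hocc : m + 1 ∉ occ) :
    Parks (m + 1) k occ l σ ∧ m + 1 ∉ σ ↔ Parks m k occ l σ := by
  constructor
  · rintro ⟨h, hσ⟩
    induction h with
    | nil => exact nil _
    | @cons occ p s l σ hp hs h ih =>
      rw [List.mem_cons, not_or] at hσ
      have hpm : p ≠ m + 1 := by
        rintro rfl
        exact hσ.1 (Option.some_inj.1 ((parkStep_of_notMem hocc).symm.trans hs))
      rw [Finset.mem_Icc] at hp
      have hp' : p ≤ m := by omega
      exact cons (Finset.mem_Icc.2 ⟨hp.1, hp'⟩)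
        ((parkStep_succ_eq_some_and_ne hp' hocc).1 ⟨hs, Ne.symm hσ.1⟩)
        (ih (by simp [hocc, hσ.1]) hσ.2)
  · intro h
    refine ⟨?_, fun hmem => by simpa using h.mem_Icc hmem⟩
    induction h with
    | nil => exact nil _
    | cons hp hs _ ih =>
      have hs' := (parkStep_succ_eq_some_and_ne (Finset.mem_Icc.1 hp).2 hocc).2 hs
      exact cons (Finset.Icc_subset_Icc_right m.le_succ hp) hs'.1 (ih (by simp [hocc, hs'.2.symm]))

theorem succ_insert_and_notMem_iff :
    Parks (m + 1) k (insert (m + 1) occ) l σ ∧ m + 1 ∉ l ↔ Parks m k occ l σ := by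
  induction l generalizing occ σ with
  | nil => cases σ <;> simp [iff_parkAssign, parkAssign]
  | cons p l ih =>
    cases σ with
    | nil => exact iff_of_false (fun h => nomatch h.1) nofun
    | cons s σ =>
      rw [cons_iff, cons_iff, Finset.insert_comm s, ← ih, List.mem_cons, not_or]
      by_cases hp : p ≤ m
      · have hne : m + 1 ≠ p := by omega
        simp [parkStep_succ_insert hp, hp, hne, Nat.le_succ_of_le hp, and_assoc]
      · refine iff_of_false (fun h => ?_) fun h => hp (Finset.mem_Icc.1 h.1).2
        have := (Finset.mem_Icc.1 h.1.1).2
        omega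

theorem getElem?_eq_of_last (h : Parks (m + 1) 1 occ l σ) (hocc : m + 1 ∈ occ)
    (hc : l[c]? = some (m + 1)) : σ[c]? = some m := by
  induction h generalizing c with
  | nil => simp at hc
  | cons _ hs _ ih =>
    cases c with
    | zero =>
      obtain rfl : _ = m + 1 := by simpa using hc
      simp [((parkStep_last_eq_some hocc).1 hs).2.2]
    | succ c => exact ih (Finset.mem_insert_of_mem hocc) hc

theorem last_notMem (h : Parks (m + 1) 1 occ l σ) (hocc : m + 1 ∈ occ) (hσ : m ∉ σ) :
    m + 1 ∉ l := by
  intro hl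
  obtain ⟨c, hc⟩ := List.mem_iff_getElem?.1 hl
  exact hσ (List.mem_of_getElem? (h.getElem?_eq_of_last hocc hc))

theorem prefers_last_or_prev (h : Parks (m + 1) 1 occ l σ) (hc : σ[c]? = some (m + 1)) :
    l[c]? = some (m + 1) ∨ l[c]? = some m ∧ (m ∈ occ ∨ m ∈ σ.take c) := by
  induction h generalizing c with
  | nil => simp at hc
  | @cons occ p s l σ hp hs h ih =>
    cases c with
    | zero =>
      obtain rfl : s = m + 1 := by simpa using hc
      unfold parkStep at hs
      simp only [Finset.mem_Icc] at hp
      simp only [List.getElem?_cons_zero, Option.some_inj, List.take_zero, List.not_mem_nil]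
      grind
    | succ c =>
      have := ih hc
      grind

theorem remove_bracket_iff (hm : 2 ≤ m) (hAS : A.length = S.length) :
    Parks (m + 1) 1 ∅ (A ++ m :: B) (S ++ (m + 1) :: T) ↔
      Parks m 1 ∅ (A ++ B) (S ++ T) ∧ m ∈ S ∧ m - 1 ∈ S := by
  rw [append_cons_iff hAS, append_iff hAS, Finset.empty_union, parkStep_eq_some_add one_pos,
    ← succ_and_notMem_iff (m := m) (l := A) (Finset.notMem_empty _),
    ← succ_insert_and_notMem_iff (m := m) (l := B)]
  simp only [List.mem_toFinset, Finset.mem_Icc]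
  constructor
  · rintro ⟨hA, -, ⟨hmS, hm'S, -, hlast⟩, hB⟩
    have hmT : m ∉ T := hB.notMem_of_mem (by simp [hmS])
    exact ⟨⟨⟨hA, hlast⟩, hB, hB.last_notMem (Finset.mem_insert_self _ _) hmT⟩, hmS, hm'S hm⟩
  · rintro ⟨⟨⟨hA, hlast⟩, hB, -⟩, hmS, hm'S⟩
    exact ⟨hA, ⟨by omega, m.le_succ⟩, ⟨hmS, fun _ => hm'S, le_rfl, hlast⟩, hB⟩

theorem remove_paren_iff (hAS : A.length = S.length) :
    Parks (m + 1) k ∅ (A ++ (m + 1) :: B) (S ++ (m + 1) :: T) ↔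
      Parks (m + 1) k {m + 1} (A ++ B) (S ++ T) ∧ m + 1 ∉ A := by
  have hA : Parks (m + 1) k ∅ A S ∧ m + 1 ∉ S ↔ Parks (m + 1) k {m + 1} A S ∧ m + 1 ∉ A :=
    (succ_and_notMem_iff (Finset.notMem_empty _)).trans succ_insert_and_notMem_iff.symm
  rw [append_cons_iff hAS, append_iff hAS, parkStep_eq_some_self, and_right_comm, ← hA,
    Finset.empty_union, List.mem_toFinset, ← Finset.insert_eq, ← and_assoc,
    and_right_comm (b := m + 1 ∈ Finset.Icc 1 (m + 1))]
  simp [and_assoc]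

theorem replace_last_iff (hm : 1 ≤ m) (hAS : A.length = S.length) :
    Parks (m + 1) 1 {m + 1} (A ++ (m + 1) :: B) (S ++ m :: T) ↔
      Parks m 1 ∅ (A ++ m :: B) (S ++ m :: T) := by
  rw [append_cons_iff hAS, append_cons_iff hAS, parkStep_last_eq_some (by simp),
    parkStep_eq_some_self, ← succ_insert_and_notMem_iff (m := m) (l := A),
    ← succ_insert_and_notMem_iff (m := m) (l := B), ← Finset.insert_eq,
    Finset.insert_comm m, insert_empty_eq, Finset.empty_union]
  simp only [Finset.mem_Icc, Finset.mem_insert, List.mem_toFinset, not_or, and_true]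
  constructor
  · rintro ⟨hA, -, ⟨-, -, hmS⟩, hB⟩
    have hmT : m ∉ T := hB.notMem_of_mem (by simp)
    exact ⟨⟨hA, hA.last_notMem (Finset.mem_singleton_self _) hmS⟩, ⟨hm, le_rfl⟩, hmS, hB,
      hB.last_notMem (Finset.mem_insert_self _ _) hmT⟩
  · rintro ⟨⟨hA, -⟩, -, hmS, hB, -⟩
    exact ⟨hA, ⟨by omega, le_rfl⟩, ⟨hm, by omega, hmS⟩, hB⟩

end Parks

section PrefList

theorem prefList_injective {m n : ℕ} :
    Function.Injective (prefList : (Fin m → Fin n) → List ℕ) := fun α β h => by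
  funext i
  simpa [Fin.ext_iff] using congrFun (List.ofFn_injective h) i

theorem exists_prefList_eq_iff {m n : ℕ} {l : List ℕ} :
    (∃ α : Fin m → Fin n, prefList α = l) ↔ l.length = m ∧ ∀ p ∈ l, p ∈ Finset.Icc 1 n := by
  constructor
  · rintro ⟨α, rfl⟩
    simp [prefList, Nat.succ_le_iff]
  · rintro ⟨rfl, hl⟩
    have hmem (i : Fin l.length) := Finset.mem_Icc.1 (hl l[i] (List.getElem_mem i.isLt))
    refine ⟨fun i => ⟨l[i] - 1, by have := hmem i; omega⟩, ?_⟩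
    exact (congrArg List.ofFn (funext fun i => Nat.sub_add_cancel (hmem i).1)).trans
      (List.ofFn_getElem ..)

end PrefList

/-- The pairs `(l, σ)` with `Parks n k occ l σ` in which `c` cars arrive: preference lists together
with the spots they lead to. All the counting below takes place in these finite sets. -/
def parkOutcomes (n k : ℕ) (occ : Finset ℕ) (c : ℕ) : Finset (List ℕ × List ℕ) :=
  (Finset.univ : Finset (Fin c → Fin n)).biUnion fun α =>
    ((parkAssign n k occ (prefList α)).map (Prod.mk (prefList α))).toFinset

section Counting

open Finset

variable {n m k c t i j : ℕ} {occ : Finset ℕ} {x : List ℕ × List ℕ}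

theorem mem_parkOutcomes :
    x ∈ parkOutcomes n k occ c ↔ x.1.length = c ∧ Parks n k occ x.1 x.2 := by
  obtain ⟨l, σ⟩ := x
  rw [Parks.iff_parkAssign, ← and_assoc, ← exists_prefList_eq_iff]
  simp only [parkOutcomes, mem_biUnion, mem_univ, true_and, Option.mem_toFinset,
    Option.mem_def, Option.map_eq_some_iff, Prod.mk.injEq]
  grind

theorem card_filter_VPFk {R : (Fin n → Fin n) → Prop} [DecidablePred R]
    {Q : List ℕ × List ℕ → Prop} [DecidablePred Q]
    (hRQ : ∀ α σ, parkAssign n k ∅ (prefList α) = some σ → (R α ↔ Q (prefList α, σ))) :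
    #{α ∈ VPFk n k | R α} = #{x ∈ parkOutcomes n k ∅ n | Q x} := by
  symm
  rw [← card_image_of_injective _ prefList_injective, ← card_image_of_injOn (f := Prod.fst)]
  · congr 1
    ext l
    simp only [VPFk, parkOutcomes, mem_image, mem_filter, mem_biUnion, mem_univ, true_and,
      Option.mem_toFinset, Option.mem_def, Option.map_eq_some_iff, Option.isSome_iff_exists]
    grind
  · rintro ⟨l, σ⟩ hx ⟨l', τ⟩ hy (rfl : l = l')
    rw [coe_filter, Set.mem_ofPred_eq, mem_parkOutcomes] at hx hy
    exact congrArg (l, ·) (hx.1.2.unique hy.1.2)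

theorem card_VPF (n : ℕ) : #(VPF n) = #(parkOutcomes n 1 ∅ n) := by
  simpa only [filter_true, VPF] using card_filter_VPFk (n := n) (k := 1) (R := fun _ => True)
    (Q := fun _ => True) fun _ _ _ => Iff.rfl

theorem card_VPF_i (n i : ℕ) :
    #(VPF_i n i) = #{x ∈ parkOutcomes n 1 ∅ n | x.2[i - 1]? = some n} :=
  card_filter_VPFk fun α σ h => by simp [spotOfCar, h]

theorem card_VPF_paren (n i : ℕ) :
    #(VPF_paren n i) =
      #{x ∈ parkOutcomes n 1 ∅ n | x.1[i - 1]? = some n ∧ x.2[i - 1]? = some n} :=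
  card_filter_VPFk fun α σ h => by simp [spotOfCar, prefOfCar, h]

theorem card_VPF_bracket (n i : ℕ) :
    #(VPF_bracket n i) =
      #{x ∈ parkOutcomes n 1 ∅ n | x.1[i - 1]? = some (n - 1) ∧ x.2[i - 1]? = some n} :=
  card_filter_VPFk fun α σ h => by simp [spotOfCar, prefOfCar, h]

theorem card_VPF_bracket_succ (hm : 2 ≤ m) (hi : i ≤ m + 1) :
    #(VPF_bracket (m + 1) i) =
      #{x ∈ parkOutcomes m 1 ∅ m | m - 1 ∈ x.2.take (i - 1) ∧ m ∈ x.2.take (i - 1)} := by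
  rw [card_VPF_bracket, Nat.add_sub_cancel]
  refine card_filter_getElem?_eq_card_of_insert (fun y hy => ?_) fun A B S T hA hS => ?_
  · obtain ⟨hl, hy⟩ := mem_parkOutcomes.1 (mem_filter.1 hy).1
    rw [hy.length_eq, hl]
    omega
  · simp only [mem_filter, mem_parkOutcomes, Parks.remove_bracket_iff hm (hA.trans hS.symm), ← hS,
      List.take_left, List.length_append, List.length_cons, ← add_assoc, add_left_inj]
    tauto

theorem filter_last_notMem_parkOutcomes :
    {x ∈ parkOutcomes (m + 1) k (insert (m + 1) occ) c | m + 1 ∉ x.1} =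
      parkOutcomes m k occ c := by
  ext x
  rw [mem_filter, mem_parkOutcomes, mem_parkOutcomes, and_assoc,
    Parks.succ_insert_and_notMem_iff]

theorem card_filter_paren_eq_card_filter_last_taken (hj : j ∈ Icc 1 (t + 1)) (ht : t ≤ m) :
    #{x ∈ parkOutcomes (m + 1) k ∅ (m + 1) | m ∈ x.2.take (t + 1) ∧
        x.1[j - 1]? = some (m + 1) ∧ x.2[j - 1]? = some (m + 1)} =
      #{x ∈ parkOutcomes (m + 1) k {m + 1} m | m + 1 ∉ x.1.take (j - 1) ∧ m ∈ x.2.take t} := by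
  rw [mem_Icc] at hj
  rw [← filter_filter]
  refine card_filter_getElem?_eq_card_of_insert (fun y hy => ?_) fun A B S T hA hS => ?_
  · obtain ⟨hl, hy⟩ := mem_parkOutcomes.1 (mem_filter.1 hy).1
    rw [hy.length_eq, hl]
    omega
  · simp only [mem_filter, mem_parkOutcomes, Parks.remove_paren_iff (hA.trans hS.symm),
      mem_take_succ_append_cons_iff (show S.length ≤ t by omega) m.succ_ne_self.symm, ← hA,
      List.take_left, List.length_append, List.length_cons, ← add_assoc, add_left_inj]
    tauto

theorem card_filter_last_taken_eq_card_VPF_paren (hm : 1 ≤ m) (ℓ : ℕ) :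
    #{x ∈ parkOutcomes (m + 1) 1 {m + 1} m | x.1[ℓ - 1]? = some (m + 1)} = #(VPF_paren m ℓ) := by
  have hspot : ∀ x ∈ parkOutcomes (m + 1) 1 {m + 1} m, x.1[ℓ - 1]? = some (m + 1) ↔
      x.1[ℓ - 1]? = some (m + 1) ∧ x.2[ℓ - 1]? = some m := fun x hx =>
    (and_iff_left_of_imp
      ((mem_parkOutcomes.1 hx).2.getElem?_eq_of_last (mem_singleton_self _))).symm
  rw [card_VPF_paren, filter_congr hspot]
  refine card_filter_getElem?_eq_card_filter_of_replace fun A B S T hA hS => ?_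
  simp only [mem_parkOutcomes, Parks.replace_last_iff hm (hA.trans hS.symm), List.length_append,
    List.length_cons]

theorem Parks.last_notMem_take_and_mem_take_iff {l σ : List ℕ} (h : Parks (m + 1) 1 {m + 1} l σ)
    (hj : 1 ≤ j) :
    (m + 1 ∉ l.take (j - 1) ∧ m ∈ σ.take t) ∧ m + 1 ∈ l ↔
      ∃ ℓ ∈ Icc j t, l[ℓ - 1]? = some (m + 1) := by
  have hspot {c : ℕ} : l[c]? = some (m + 1) → σ[c]? = some m :=
    h.getElem?_eq_of_last (mem_singleton_self _)
  simp only [mem_take_iff_exists_mem_Icc_getElem?, Finset.mem_Icc]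
  constructor
  · rintro ⟨⟨hlj, ℓ, hℓ, hσℓ⟩, hl⟩
    obtain ⟨c, hc⟩ := List.mem_iff_getElem?.1 hl
    obtain rfl : ℓ = c + 1 := getElem?_sub_one_inj h.nodup hℓ.1 (by omega) hσℓ (hspot hc)
    refine ⟨c + 1, ⟨?_, hℓ.2⟩, hc⟩
    by_contra hcj
    exact hlj ⟨c + 1, by omega, hc⟩
  · rintro ⟨ℓ, hℓ, hlℓ⟩
    refine ⟨⟨?_, ℓ, by omega, hspot hlℓ⟩, List.mem_of_getElem? hlℓ⟩
    rintro ⟨d, hd, hld⟩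
    have := getElem?_sub_one_inj h.nodup (by omega) hd.1 (hspot hlℓ) (hspot hld)
    omega

theorem card_filter_paren_eq_add_sum (hm : 1 ≤ m) (hj : j ∈ Icc 1 (t + 1)) (ht : t ≤ m) :
    #{x ∈ parkOutcomes (m + 1) 1 ∅ (m + 1) | m ∈ x.2.take (t + 1) ∧
        x.1[j - 1]? = some (m + 1) ∧ x.2[j - 1]? = some (m + 1)} =
      #{x ∈ parkOutcomes m 1 ∅ m | m ∈ x.2.take t} + ∑ ℓ ∈ Icc j t, #(VPF_paren m ℓ) := by
  have h1j := (mem_Icc.1 hj).1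
  rw [card_filter_paren_eq_card_filter_last_taken hj ht,
    ← card_filter_add_card_filter_not (p := fun x => m + 1 ∉ x.1), filter_filter, filter_filter]
  congr 1
  · rw [← filter_last_notMem_parkOutcomes (occ := ∅), insert_empty_eq, filter_filter _ _
      (parkOutcomes (m + 1) 1 {m + 1} m)]
    congr 1
    refine filter_congr fun x _ => ?_
    have := List.mem_of_mem_take (a := m + 1) (l := x.1) (i := j - 1)
    tauto
  · simp only [← card_filter_last_taken_eq_card_VPF_paren hm]
    rw [← card_filter_exists_eq_sum]
    · congr 1
      refine filter_congr fun x hx => ?_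
      rw [not_not, (mem_parkOutcomes.1 hx).2.last_notMem_take_and_mem_take_iff h1j]
    · intro x hx c hc d hd hlc hld
      have h := (mem_parkOutcomes.1 hx).2
      have hlast := mem_singleton_self (m + 1)
      exact getElem?_sub_one_inj h.nodup (h1j.trans (mem_Icc.1 hc).1) (h1j.trans (mem_Icc.1 hd).1)
        (h.getElem?_eq_of_last hlast hlc) (h.getElem?_eq_of_last hlast hld)

theorem card_VPF_paren_succ (hm : 1 ≤ m) (hj : j ∈ Icc 1 (m + 1)) :
    #(VPF_paren (m + 1) j) = #(VPF m) + ∑ ℓ ∈ Icc j m, #(VPF_paren m ℓ) := by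
  have hfull {s n : ℕ} (hs : s ∈ Icc 1 n) :
      ∀ x ∈ parkOutcomes n 1 ∅ n, s ∈ x.2.take n := fun x hx =>
    (mem_parkOutcomes.1 hx).2.mem_take_of_length_eq (mem_parkOutcomes.1 hx).1 hs
  have hrec := card_filter_paren_eq_add_sum hm hj le_rfl
  rwa [← filter_filter, filter_true_of_mem (hfull (mem_Icc.2 ⟨hm, m.le_succ⟩)), ← card_VPF_paren,
    filter_true_of_mem (hfull (mem_Icc.2 ⟨hm, le_rfl⟩)), ← card_VPF] at hrec

theorem card_filter_last_eq_bracket_add_paren (hi : i - 1 ≤ t) :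
    #{x ∈ parkOutcomes (m + 1) 1 ∅ (m + 1) | m ∈ x.2.take t ∧ x.2[i - 1]? = some (m + 1)} =
      #(VPF_bracket (m + 1) i) +
        #{x ∈ parkOutcomes (m + 1) 1 ∅ (m + 1) | m ∈ x.2.take t ∧
          x.1[i - 1]? = some (m + 1) ∧ x.2[i - 1]? = some (m + 1)} := by
  rw [card_VPF_bracket, Nat.add_sub_cancel, ← card_union_of_disjoint, ← filter_or]
  · congr 1
    refine filter_congr fun x hx => ?_
    have hpref := (mem_parkOutcomes.1 hx).2.prefers_last_or_prev (c := i - 1)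
    have htake := (List.take_subset_take_left x.2 hi) (a := m)
    simp only [notMem_empty, false_or] at hpref
    grind
  · refine disjoint_filter.2 fun x _ hprev hlast => ?_
    simp [hprev.1] at hlast

theorem card_VPF_bracket_add_two (hm : 1 ≤ m) (hi : i ≤ m + 2) :
    #(VPF_bracket (m + 2) i) =
      ∑ j ∈ Icc 1 (i - 1), (#(VPF_bracket (m + 1) j) +
        (∑ ℓ ∈ Icc 1 (i - 2), #(VPF_i m ℓ) + ∑ ℓ ∈ Icc j (i - 2), #(VPF_paren m ℓ))) := by
  have hnodup {n : ℕ} : ∀ x ∈ parkOutcomes n 1 ∅ n, x.2.Nodup := fun x hx =>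
    (mem_parkOutcomes.1 hx).2.nodup
  rw [card_VPF_bracket_succ (by omega) hi, Nat.add_sub_cancel, ← filter_filter,
    card_filter_mem_take_eq_sum fun x hx => hnodup x (mem_filter.1 hx).1]
  refine sum_congr rfl fun j hj => ?_
  rw [mem_Icc] at hj
  obtain ⟨t, rfl⟩ : ∃ t, i = t + 2 := Nat.exists_eq_add_of_le' (by omega)
  simp only [card_VPF_i, Nat.add_sub_cancel]
  rw [filter_filter, ← card_filter_mem_take_eq_sum hnodup,
    ← card_filter_paren_eq_add_sum hm (mem_Icc.2 hj) (by omega),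
    ← card_filter_last_eq_bracket_add_paren (by omega)]
  rfl

end Counting

theorem sum_card_VPF_paren_succ {m u : ℕ} (hm : 1 ≤ m) (hu : u ≤ m + 1) :
    ∑ c ∈ Finset.Icc 1 u, c * (VPF_paren (m + 1) c).card =
      u * (u + 1) / 2 * (VPF m).card +
        (∑ ℓ ∈ Finset.Icc 1 (u - 1), ℓ * (ℓ + 1) / 2 * (VPF_paren m ℓ).card +
          u * (u + 1) / 2 * ∑ ℓ ∈ Finset.Icc u m, (VPF_paren m ℓ).card) := by
  rw [← sum_Icc_one_mul_sum_Icc hu, ← sum_Icc_one_id, Finset.sum_mul, ← Finset.sum_add_distrib]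
  refine Finset.sum_congr rfl fun c hc => ?_
  rw [card_VPF_paren_succ hm (Finset.Icc_subset_Icc_right hu hc), mul_add]

/-- For every `n ≥ 4` and `i ∈ [n]`,
`|VPF_{n,[i]}| = ((i−1)(i−2)/2)·|VPF_{n-3}| + ∑_{ℓ=1}^{i-1} |VPF_{n-1,[ℓ]}|
  + (i−1)·∑_{ℓ=1}^{i-2} |VPF_{n-2,ℓ}| + ∑_{ℓ=1}^{i-3} (ℓ(ℓ+1)/2)·|VPF_{n-3,(ℓ)}|
  + ((i−2)(i−1)/2)·∑_{ℓ=i-2}^{n-3} |VPF_{n-3,(ℓ)}|`. -/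
theorem vpf_bracket_card_eq (n : ℕ) (hn : 4 ≤ n) (i : ℕ) (hi : i ∈ Finset.Icc 1 n) :
    (VPF_bracket n i).card =
      (i-1) * (i-2) / 2 * (VPF (n-3)).card
        + ∑ ℓ ∈ Finset.Icc 1 (i-1), (VPF_bracket (n-1) ℓ).card
        + (i-1) * ∑ ℓ ∈ Finset.Icc 1 (i-2), (VPF_i (n-2) ℓ).card
        + ∑ ℓ ∈ Finset.Icc 1 (i-3), ℓ * (ℓ+1) / 2 * (VPF_paren (n-3) ℓ).card
        + (i-2) * (i-1) / 2 * ∑ ℓ ∈ Finset.Icc (i-2) (n-3), (VPF_paren (n-3) ℓ).card := by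
  obtain ⟨m, rfl⟩ : ∃ m, n = m + 3 := Nat.exists_eq_add_of_le' (by omega)
  obtain ⟨hi1, him⟩ := Finset.mem_Icc.1 hi
  have htri : (i - 2) * (i - 2 + 1) = (i - 2) * (i - 1) := by
    obtain rfl | hi2 : i = 1 ∨ 2 ≤ i := by omega
    · rfl
    · rw [show i - 2 + 1 = i - 1 by omega]
  calc
    (VPF_bracket (m + 3) i).card
    _ = ∑ j ∈ Finset.Icc 1 (i - 1), ((VPF_bracket (m + 2) j).card +
          (∑ ℓ ∈ Finset.Icc 1 (i - 2), (VPF_i (m + 1) ℓ).card +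
            ∑ ℓ ∈ Finset.Icc j (i - 2), (VPF_paren (m + 1) ℓ).card)) :=
      card_VPF_bracket_add_two (by omega) him
    _ = ∑ j ∈ Finset.Icc 1 (i - 1), (VPF_bracket (m + 2) j).card +
          ((i - 1) * ∑ ℓ ∈ Finset.Icc 1 (i - 2), (VPF_i (m + 1) ℓ).card +
            ∑ ℓ ∈ Finset.Icc 1 (i - 2), ℓ * (VPF_paren (m + 1) ℓ).card) := by
      simp only [Finset.sum_add_distrib, sum_Icc_one_sum_Icc_comm (show i - 2 ≤ i - 1 by omega),
        Finset.sum_const, Nat.card_Icc, smul_eq_mul, Nat.add_sub_cancel]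
    _ = _ := by
      rw [sum_card_VPF_paren_succ (by omega) (by omega), htri, mul_comm (i - 1) (i - 2),
        show m + 3 - 1 = m + 2 from rfl, show m + 3 - 2 = m + 1 from rfl, Nat.add_sub_cancel,
        Nat.sub_sub]
      ring
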